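/- The Steiner triple system of order 13 on Z_13 obtained by developing the base blocks {0,2,7} and {0,1,4} modulo 13 is nonsequenceable. -/

import Mathlib

/-- `B` is (the block set of) a partial Steiner triple system on the point set `X`:
every block has 3 points and every pair of distinct points lies in at most one block. -/
def isPSTS {X : Type*} [DecidableEq X] (B : Finset (Finset X)) : Prop :=
  (∀ b ∈ B, b.card = 3) ∧
  ∀ p q : X, p ≠ q → (B.filter (fun b => p ∈ b ∧ q ∈ b)).card ≤ 1

/-- `B` is (the block set of) a Steiner triple system on the point set `X`:
every block has 3 points and every pair of distinct points lies in exactly one block. -/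
def isSTS {X : Type*} [DecidableEq X] (B : Finset (Finset X)) : Prop :=
  (∀ b ∈ B, b.card = 3) ∧
  ∀ p q : X, p ≠ q → (B.filter (fun b => p ∈ b ∧ q ∈ b)).card = 1

/-- The finset `S` can be partitioned into blocks of `B`. -/
def blocksPartition {X : Type*} [DecidableEq X] (B : Finset (Finset X)) (S : Finset X) : Prop :=
  ∃ P : Finset (Finset X), P ⊆ B ∧
    (∀ b₁ ∈ P, ∀ b₂ ∈ P, b₁ ≠ b₂ → Disjoint b₁ b₂) ∧ P.biUnion id = S

/-- `A` is an almost parallel class of `B`: a set of pairwise disjoint blocks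
covering all points of `X` except exactly one. -/
def isAPC {X : Type*} [DecidableEq X] [Fintype X] (B A : Finset (Finset X)) : Prop :=
  A ⊆ B ∧ (∀ b₁ ∈ A, ∀ b₂ ∈ A, b₁ ≠ b₂ → Disjoint b₁ b₂) ∧
    ∃ y : X, A.biUnion id = Finset.univ.erase y

/-- `B` is sequenceable: there is a sequencing of the points (a bijection from
`Fin n` to `X`) such that no proper segment can be partitioned into blocks of `B`. -/
def sequenceable {X : Type*} [DecidableEq X] [Fintype X] (B : Finset (Finset X)) : Prop :=
  ∃ f : Fin (Fintype.card X) ≃ X,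
    ∀ i j : Fin (Fintype.card X), i ≤ j →
      ¬((i : ℕ) = 0 ∧ (j : ℕ) = Fintype.card X - 1) →
      ¬ blocksPartition B ((Finset.Icc i j).image f)

/-- The blocks obtained by developing the base blocks modulo 13. -/
def dev13 : Finset (Finset (ZMod 13)) :=
  Finset.univ.biUnion fun t : ZMod 13 =>
    ({{0,2,7}, {0,1,4}} : Finset (Finset (ZMod 13))).image (fun b => b.image (· + t))


def apc13 (y : ZMod 13) : Finset (Finset (ZMod 13)) :=
  {{1+y,6+y,12+y}, {2+y,4+y,9+y}, {7+y,8+y,11+y}, {3+y,5+y,10+y}}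

set_option maxRecDepth 100000 in
set_option maxHeartbeats 4000000 in
theorem apc13_sub : ∀ y : ZMod 13, apc13 y ⊆ dev13 := by decide +kernel

theorem apc13_aux (y a b c d e g : ZMod 13)
    (h : ({a, b, c} : Finset (ZMod 13)) ∩ {d, e, g} = ∅) :
    ({a + y, b + y, c + y} : Finset (ZMod 13)) ∩ {d + y, e + y, g + y} = ∅ := by
  have h1 := congrArg (Finset.image (· + y)) h
  rw [Finset.image_inter _ _ (add_left_injective y)] at h1
  simpa only [Finset.image_insert, Finset.image_singleton, Finset.image_empty] using h1

theorem apc13_disj : ∀ y : ZMod 13, ∀ b₁ ∈ apc13 y, ∀ b₂ ∈ apc13 y, b₁ ≠ b₂ → b₁ ∩ b₂ = ∅ := by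
  intro y b₁ h₁ b₂ h₂ h
  simp only [apc13, Finset.mem_insert, Finset.mem_singleton] at h₁ h₂
  rcases h₁ with rfl | rfl | rfl | rfl <;> rcases h₂ with rfl | rfl | rfl | rfl <;>
    first
    | exact absurd rfl h
    | exact apc13_aux y _ _ _ _ _ _ (by decide)

set_option maxRecDepth 100000 in
set_option maxHeartbeats 4000000 in
theorem apc13_union : ∀ y : ZMod 13, (apc13 y).biUnion id = Finset.univ.erase y := by
  decide +kernel

theorem stmt3 : ¬ sequenceable dev13 := by
  rintro ⟨f, hf⟩
  have hc : Fintype.card (ZMod 13) = 13 := ZMod.card 13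
  let a : Fin (Fintype.card (ZMod 13)) := ⟨0, by omega⟩
  let b : Fin (Fintype.card (ZMod 13)) := ⟨11, by omega⟩
  let c : Fin (Fintype.card (ZMod 13)) := ⟨12, by omega⟩
  refine hf a b (by simp [a, b, Fin.le_def]) (by simp [a, b, hc]) ?_
  refine ⟨apc13 (f c), apc13_sub _, fun b₁ h₁ b₂ h₂ h =>
    Finset.disjoint_iff_inter_eq_empty.2 (apc13_disj _ b₁ h₁ b₂ h₂ h), ?_⟩
  rw [apc13_union]
  ext x
  obtain ⟨i, rfl⟩ := f.surjective x
  have hi := i.isLt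
  simp only [Finset.mem_erase, Finset.mem_univ, and_true, Finset.mem_image, Finset.mem_Icc,
    EmbeddingLike.apply_eq_iff_eq, exists_eq_right, ne_eq]
  rw [Fin.ext_iff, Fin.le_def, Fin.le_def]
  show ¬ (i : ℕ) = 12 ↔ 0 ≤ (i : ℕ) ∧ (i : ℕ) ≤ 11
  omega
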